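/- arXiv:1905.07829 — 8 statements merged into one kernel-verified Lean document; each statement's English description precedes it below -/
import Mathlib

section
/- Let G be the simple graph on vertex set {1,...,6} with edge set {{1,2},{1,3},{2,3},{1,4},{4,6},{3,6},{5,6},{2,5}}. Then for every injective map φ : {1,...,6} → ℝ² satisfying dist(φ(i), φ(j)) = 1 for every edge {i,j} of G, one has dist(φ(4), φ(5)) = 1. (That is, G is a totally unfaithful unit-distance graph: the non-adjacent pair {4,5} is at distance 1 in every embedding.) -/
lemma aux_perp (a b c d e f : ℝ) (h1 : a*c+b*d=0) (h2 : a*e+b*f=0) (h3 : c*e+d*f=0)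
    (ha : ¬ (a = 0 ∧ b = 0)) (hc : ¬ (c = 0 ∧ d = 0)) : e = 0 ∧ f = 0 := by
  have k1 : a * (c*f-d*e) = 0 := by linear_combination f*h1 - d*h2
  have k2 : b * (c*f-d*e) = 0 := by linear_combination c*h2 - e*h1
  have k : c*f-d*e = 0 := by
    by_contra hk
    exact ha ⟨(mul_eq_zero.1 k1).resolve_right hk, (mul_eq_zero.1 k2).resolve_right hk⟩
  have l : c*c+d*d ≠ 0 := fun h => hc ⟨by nlinarith, by nlinarith⟩
  constructor
  · refine (mul_eq_zero.1 (?_ : (c*c+d*d)*e = 0)).resolve_left l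
    linear_combination c*h3 - d*k
  · refine (mul_eq_zero.1 (?_ : (c*c+d*d)*f = 0)).resolve_left l
    linear_combination d*h3 + c*k

lemma aux_dist (x y : EuclideanSpace ℝ (Fin 2)) :
    dist x y = 1 ↔ (x 0 - y 0)^2 + (x 1 - y 1)^2 = 1 := by
  rw [EuclideanSpace.dist_eq, Real.sqrt_eq_one]
  simp [Fin.sum_univ_two, Real.dist_eq, sq_abs]

lemma aux_ne {x y : EuclideanSpace ℝ (Fin 2)} (h : x ≠ y) :
    ¬ (x 0 - y 0 = 0 ∧ x 1 - y 1 = 0) := by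
  rintro ⟨h0, h1⟩
  apply h
  ext i
  fin_cases i
  · exact sub_eq_zero.1 h0
  · exact sub_eq_zero.1 h1

lemma aux_rhombus (a b p q : EuclideanSpace ℝ (Fin 2)) (hab : a ≠ b) (hpq : p ≠ q)
    (h1 : dist a p = 1) (h2 : dist a q = 1) (h3 : dist b p = 1) (h4 : dist b q = 1) :
    a 0 + b 0 - p 0 - q 0 = 0 ∧ a 1 + b 1 - p 1 - q 1 = 0 := by
  rw [aux_dist] at h1 h2 h3 h4
  refine aux_perp _ _ _ _ _ _ ?_ ?_ ?_ (aux_ne hab) (aux_ne hpq)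
  · linear_combination (-h1 + h2 + h3 - h4)/2
  · linear_combination (h1 + h2 - h3 - h4)/2
  · linear_combination (-h1 + h2 - h3 + h4)/2

theorem totally_unfaithful_six :
    ∀ φ : ℕ → EuclideanSpace ℝ (Fin 2),
    Set.InjOn φ (Set.Icc 1 6) →
    dist (φ 1) (φ 2) = 1 →
    dist (φ 1) (φ 3) = 1 →
    dist (φ 2) (φ 3) = 1 →
    dist (φ 1) (φ 4) = 1 →
    dist (φ 4) (φ 6) = 1 →
    dist (φ 3) (φ 6) = 1 →
    dist (φ 5) (φ 6) = 1 →
    dist (φ 2) (φ 5) = 1 →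
    dist (φ 4) (φ 5) = 1 := by
  intro φ hi h12 h13 h23 h14 h46 h36 h56 h25
  have ne : ∀ i j : ℕ, 1 ≤ i → i ≤ 6 → 1 ≤ j → j ≤ 6 → i ≠ j → φ i ≠ φ j :=
    fun i j a b c d h e => h (hi ⟨a, b⟩ ⟨c, d⟩ e)
  rw [dist_comm] at h46 h36 h56
  obtain ⟨r0, r1⟩ := aux_rhombus (φ 1) (φ 6) (φ 3) (φ 4) (ne _ _ (by simp) (by simp) (by simp) (by simp) (by simp))
    (ne _ _ (by simp) (by simp) (by simp) (by simp) (by simp)) h13 h14 h36 h46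
  obtain ⟨s0, s1⟩ := aux_rhombus (φ 2) (φ 6) (φ 3) (φ 5) (ne _ _ (by simp) (by simp) (by simp) (by simp) (by simp))
    (ne _ _ (by simp) (by simp) (by simp) (by simp) (by simp)) h23 h25 h36 h56
  rw [aux_dist] at h12 ⊢
  have e0 : φ 4 0 - φ 5 0 = φ 1 0 - φ 2 0 := by linarith
  have e1 : φ 4 1 - φ 5 1 = φ 1 1 - φ 2 1 := by linarith
  rw [e0, e1, h12]
end

section
/- Let G be the simple graph on vertex set {1,...,8} with edge set {{1,2},{1,3},{2,3},{2,4},{3,4},{5,6},{5,7},{6,8},{7,8},{1,5},{3,7},{4,8}}. Then for every injective map φ : {1,...,8} → ℝ² satisfying dist(φ(i), φ(j)) = 1 for every edge {i,j} of G, one has dist(φ(6), φ(7)) = 1 and dist(φ(2), φ(6)) = 1. (That is, G is a totally unfaithful unit-distance graph: the non-adjacent pairs {6,7} and {2,6} are at distance 1 in every embedding.) -/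
theorem rhombus_aux {a b c d : EuclideanSpace ℝ (Fin 2)} (hab : dist a b = 1) (hbc : dist b c = 1)
    (hcd : dist c d = 1) (hda : dist d a = 1) (hac : a ≠ c) (hbd : b ≠ d) : c = b + d - a := by
  rw [EuclideanSpace.dist_eq, Real.sqrt_eq_one] at hab hbc hcd hda
  simp only [Fin.sum_univ_two, Real.dist_eq, sq_abs] at hab hbc hcd hda
  have hw : 0 < (c 0 - a 0) ^ 2 + (c 1 - a 1) ^ 2 := by
    by_contra h
    apply hac
    ext i
    fin_cases i <;> simp <;> nlinarith [sq_nonneg (c 0 - a 0), sq_nonneg (c 1 - a 1)]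
  have hn : 0 < (b 0 - d 0) ^ 2 + (b 1 - d 1) ^ 2 := by
    by_contra h
    apply hbd
    ext i
    fin_cases i <;> simp <;> nlinarith [sq_nonneg (b 0 - d 0), sq_nonneg (b 1 - d 1)]
  have h1 : (c 0 - a 0) * (b 0 - d 0) + (c 1 - a 1) * (b 1 - d 1) = 0 := by linarith
  have h2 : (b 0 + d 0 - a 0 - c 0) * (b 0 - d 0) + (b 1 + d 1 - a 1 - c 1) * (b 1 - d 1) = 0 := by
    linarith
  have h3 : (b 0 + d 0 - a 0 - c 0) * (c 0 - a 0) + (b 1 + d 1 - a 1 - c 1) * (c 1 - a 1) = 0 := by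
    linarith
  have hD : (c 0 - a 0) * (b 1 - d 1) - (c 1 - a 1) * (b 0 - d 0) ≠ 0 := by
    intro h
    have := mul_pos hw hn
    have e : ((c 0 - a 0) ^ 2 + (c 1 - a 1) ^ 2) * ((b 0 - d 0) ^ 2 + (b 1 - d 1) ^ 2)
      = ((c 0 - a 0) * (b 1 - d 1) - (c 1 - a 1) * (b 0 - d 0)) ^ 2
        + ((c 0 - a 0) * (b 0 - d 0) + (c 1 - a 1) * (b 1 - d 1)) ^ 2 := by ring
    rw [h, h1] at e
    linarith
  have e0 : b 0 + d 0 - a 0 - c 0 = 0 := by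
    apply (mul_eq_zero.mp _).resolve_right hD
    linear_combination (b 1 - d 1) * h3 - (c 1 - a 1) * h2
  have e1 : b 1 + d 1 - a 1 - c 1 = 0 := by
    apply (mul_eq_zero.mp _).resolve_right hD
    linear_combination (c 0 - a 0) * h2 - (b 0 - d 0) * h3
  ext i
  fin_cases i <;> simp <;> linarith

theorem totally_unfaithful_eight :
    ∀ φ : ℕ → EuclideanSpace ℝ (Fin 2),
    Set.InjOn φ (Set.Icc 1 8) →
    dist (φ 1) (φ 2) = 1 →
    dist (φ 1) (φ 3) = 1 →
    dist (φ 2) (φ 3) = 1 →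
    dist (φ 2) (φ 4) = 1 →
    dist (φ 3) (φ 4) = 1 →
    dist (φ 5) (φ 6) = 1 →
    dist (φ 5) (φ 7) = 1 →
    dist (φ 6) (φ 8) = 1 →
    dist (φ 7) (φ 8) = 1 →
    dist (φ 1) (φ 5) = 1 →
    dist (φ 3) (φ 7) = 1 →
    dist (φ 4) (φ 8) = 1 →
    dist (φ 6) (φ 7) = 1 ∧ dist (φ 2) (φ 6) = 1 := by
  intro φ hi h12 h13 h23 h24 h34 h56 h57 h68 h78 h15 h37 h48
  have ne : ∀ i j : ℕ, i ∈ Set.Icc 1 8 → j ∈ Set.Icc 1 8 → i ≠ j → φ i ≠ φ j :=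
    fun i j h h' hn he => hn (hi h h' he)
  have r1 := rhombus_aux h12 h24 (dist_comm (φ 3) _ ▸ h34) (dist_comm (φ 1) _ ▸ h13)
    (ne 1 4 (by simp) (by simp) (by simp)) (ne 2 3 (by simp) (by simp) (by simp))
  have r2 := rhombus_aux h15 h57 (dist_comm (φ 3) _ ▸ h37) (dist_comm (φ 1) _ ▸ h13)
    (ne 1 7 (by simp) (by simp) (by simp)) (ne 5 3 (by simp) (by simp) (by simp))
  have r3 := rhombus_aux h37 h78 (dist_comm (φ 4) _ ▸ h48) (dist_comm (φ 3) _ ▸ h34)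
    (ne 3 8 (by simp) (by simp) (by simp)) (ne 7 4 (by simp) (by simp) (by simp))
  have r4 := rhombus_aux h56 h68 (dist_comm (φ 7) _ ▸ h78) (dist_comm (φ 5) _ ▸ h57)
    (ne 5 8 (by simp) (by simp) (by simp)) (ne 6 7 (by simp) (by simp) (by simp))
  have h8 : φ 6 + φ 7 - φ 5 = φ 7 + φ 4 - φ 3 := r4.symm.trans r3
  have r6 : φ 6 = φ 2 + φ 5 - φ 1 := by
    have : φ 6 = (φ 6 + φ 7 - φ 5) + φ 5 - φ 7 := by abel
    rw [this, h8, r1]; abel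
  constructor
  · rw [← h23, dist_eq_norm, dist_eq_norm, r6, r2]; congr 1; abel
  · rw [← h15, dist_eq_norm, dist_eq_norm, r6]; congr 1; abel
end

section
/- Let G be a simple graph on at most 5 vertices. Then G is unit-distance if and only if G contains no subgraph isomorphic to the complete graph K₄ and no subgraph isomorphic to the complete bipartite graph K_{2,3}. (Containing a subgraph isomorphic to H means: there exists an injective map from the vertices of H into the vertices of G carrying every edge of H to an edge of G.) -/
/-- `G` contains a subgraph isomorphic to `H`: an injective map from the
vertices of `H` to the vertices of `G` carrying edges of `H` to edges of `G`. -/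
def ContainsSub {α V : Type*} (H : SimpleGraph α) (G : SimpleGraph V) : Prop :=
  ∃ f : α → V, Function.Injective f ∧ ∀ a b, H.Adj a b → G.Adj (f a) (f b)

/-- `G` is a unit-distance graph. -/
def IsUnitDistance {V : Type*} (G : SimpleGraph V) : Prop :=
  ∃ φ : V → EuclideanSpace ℝ (Fin 2), Function.Injective φ ∧
    ∀ v w, G.Adj v w → dist (φ v) (φ w) = 1

def tblAdj (a b c d e f g h i j : Bool) (u v : Fin 5) : Bool :=
  (![![false, a, b, c, d], ![a, false, e, f, g], ![b, e, false, h, i],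
    ![c, f, h, false, j], ![d, g, i, j, false]] : Fin 5 → Fin 5 → Bool) u v

set_option synthInstance.maxHeartbeats 2000000 in
set_option synthInstance.maxSize 10000 in
set_option maxHeartbeats 2000000 in
theorem tbl_main : ∀ a b c d e f g h i j : Bool,
    (∃ x : Fin 5, ∀ u, u ≠ x → ∀ v, v ≠ x → u ≠ v → tblAdj a b c d e f g h i j u v = true) ∨
    (∃ x y : Fin 5, x ≠ y ∧ ∀ z, z ≠ x → z ≠ y → tblAdj a b c d e f g h i j x z = true ∧
      tblAdj a b c d e f g h i j y z = true) ∨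
    (∃ p r : Fin 5, p ≠ r ∧ tblAdj a b c d e f g h i j p r = false ∧
      ∃ s : Fin 5, s ≠ p ∧ s ≠ r ∧ tblAdj a b c d e f g h i j p s = false ∧
      ∃ q : Fin 5, q ≠ p ∧ q ≠ r ∧ q ≠ s ∧ tblAdj a b c d e f g h i j q s = false ∧
      ∃ o : Fin 5, o ≠ p ∧ o ≠ r ∧ o ≠ s ∧ o ≠ q) := by
  decide +kernel

theorem graph_main (G : SimpleGraph (Fin 5)) :
    (∃ x : Fin 5, ∀ u, u ≠ x → ∀ v, v ≠ x → u ≠ v → G.Adj u v) ∨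
    (∃ x y : Fin 5, x ≠ y ∧ ∀ z, z ≠ x → z ≠ y → G.Adj x z ∧ G.Adj y z) ∨
    (∃ p r : Fin 5, p ≠ r ∧ ¬ G.Adj p r ∧
      ∃ s : Fin 5, s ≠ p ∧ s ≠ r ∧ ¬ G.Adj p s ∧
      ∃ q : Fin 5, q ≠ p ∧ q ≠ r ∧ q ≠ s ∧ ¬ G.Adj q s ∧
      ∃ o : Fin 5, o ≠ p ∧ o ≠ r ∧ o ≠ s ∧ o ≠ q) := by
  classical
  have h := tbl_main (decide (G.Adj 0 1)) (decide (G.Adj 0 2)) (decide (G.Adj 0 3))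
    (decide (G.Adj 0 4)) (decide (G.Adj 1 2)) (decide (G.Adj 1 3)) (decide (G.Adj 1 4))
    (decide (G.Adj 2 3)) (decide (G.Adj 2 4)) (decide (G.Adj 3 4))
  have key : ∀ u v, tblAdj (decide (G.Adj 0 1)) (decide (G.Adj 0 2)) (decide (G.Adj 0 3))
    (decide (G.Adj 0 4)) (decide (G.Adj 1 2)) (decide (G.Adj 1 3)) (decide (G.Adj 1 4))
    (decide (G.Adj 2 3)) (decide (G.Adj 2 4)) (decide (G.Adj 3 4)) u v = decide (G.Adj u v) := by
    intro u v
    fin_cases u <;> fin_cases v <;> simp [tblAdj] <;> exact G.adj_comm _ _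
  simpa only [key, decide_eq_true_eq, decide_eq_false_iff_not] using h

theorem containsSub_of_map {α V W : Type*} (H : SimpleGraph α) (G : SimpleGraph V) (e : V ↪ W)
    (hH : ∀ a, ∃ b, H.Adj a b) (h : ContainsSub H (G.map e)) : ContainsSub H G := by
  obtain ⟨f, hf, hadj⟩ := h
  have h1 : ∀ a, ∃ v, e v = f a := by
    intro a
    obtain ⟨b, hb⟩ := hH a
    obtain ⟨u, v, -, hu, -⟩ := (SimpleGraph.map_adj _ _ _ _).1 (hadj a b hb)
    exact ⟨u, hu⟩
  choose g hg using h1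
  refine ⟨g, fun a b hab => hf ?_, fun a b hab => ?_⟩
  · rw [← hg a, ← hg b, hab]
  · have := hadj a b hab
    rw [← hg a, ← hg b] at this
    exact SimpleGraph.map_adj_apply.1 this

theorem unitDistance_of_map {V W : Type*} (G : SimpleGraph V) (e : V ↪ W)
    (h : IsUnitDistance (G.map e)) : IsUnitDistance G := by
  obtain ⟨φ, hφ, hd⟩ := h
  exact ⟨φ ∘ e, hφ.comp e.injective, fun v w hvw => hd _ _ (SimpleGraph.map_adj_apply.2 hvw)⟩

noncomputable def fanPt : Fin 5 → EuclideanSpace ℝ (Fin 2) :=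
  ![!₂[0, 0], !₂[-1, 0], !₂[-(1/2), √3/2], !₂[1/2, √3/2], !₂[1, 0]]

theorem fanPt_inj : Function.Injective fanPt := by
  intro i j hij
  have h0 : fanPt i 0 = fanPt j 0 := by rw [hij]
  revert h0
  fin_cases i <;> fin_cases j <;> simp [fanPt] <;> norm_num

theorem fan_unit (G : SimpleGraph (Fin 5)) (p r s q o : Fin 5) (h1 : p ≠ r) (h2 : ¬ G.Adj p r)
    (h3 : s ≠ p) (h4 : s ≠ r) (h5 : ¬ G.Adj p s) (h6 : q ≠ p) (h7 : q ≠ r) (h8 : q ≠ s)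
    (h9 : ¬ G.Adj q s) (h10 : o ≠ p) (h11 : o ≠ r) (h12 : o ≠ s) (h13 : o ≠ q) :
    IsUnitDistance G := by
  have hinj : Function.Injective (![o, p, q, r, s] : Fin 5 → Fin 5) := by
    intro i j
    fin_cases i <;> fin_cases j <;> simp <;> first | assumption | (apply Ne.symm; assumption)
  let σ : Fin 5 ≃ Fin 5 := Equiv.ofBijective _ (Finite.injective_iff_bijective.1 hinj)
  have h2' : ¬ G.Adj r p := fun h => h2 h.symm
  have h5' : ¬ G.Adj s p := fun h => h5 h.symm
  have h9' : ¬ G.Adj s q := fun h => h9 h.symm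
  refine ⟨fanPt ∘ σ.symm, fanPt_inj.comp σ.symm.injective, ?_⟩
  have key : ∀ i j, G.Adj ((![o, p, q, r, s] : Fin 5 → Fin 5) i)
      ((![o, p, q, r, s] : Fin 5 → Fin 5) j) → dist (fanPt i) (fanPt j) = 1 := by
    intro i j
    have hs : √3 ^ 2 = (3 : ℝ) := Real.sq_sqrt (by norm_num)
    fin_cases i <;> fin_cases j <;>
      simp [h2, h5, h9, h2', h5', h9', fanPt, EuclideanSpace.dist_eq, Fin.sum_univ_two,
        Real.dist_eq, sq_abs, div_pow, hs] <;> norm_num [div_pow, hs]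
  intro v w hvw
  apply key
  change G.Adj (σ (σ.symm v)) (σ (σ.symm w))
  simpa using hvw

theorem no_K4 (φ : Fin 4 → EuclideanSpace ℝ (Fin 2))
    (h : ∀ a b, a ≠ b → dist (φ a) (φ b) = 1) : False := by
  have h2 : ∀ a b, a ≠ b → (φ a 0 - φ b 0) ^ 2 + (φ a 1 - φ b 1) ^ 2 = 1 := by
    intro a b hab
    have := h a b hab
    rw [EuclideanSpace.dist_eq, Real.sqrt_eq_one, Fin.sum_univ_two, Real.dist_eq, Real.dist_eq,
      sq_abs, sq_abs] at this
    exact this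
  have e01 := h2 0 1 (by decide)
  have e02 := h2 0 2 (by decide)
  have e03 := h2 0 3 (by decide)
  have e12 := h2 1 2 (by decide)
  have e13 := h2 1 3 (by decide)
  have e23 := h2 2 3 (by decide)
  obtain ⟨x1, hx1⟩ : ∃ t, t = φ 0 0 - φ 1 0 := ⟨_, rfl⟩
  obtain ⟨x2, hx2⟩ : ∃ t, t = φ 0 0 - φ 2 0 := ⟨_, rfl⟩
  obtain ⟨x3, hx3⟩ : ∃ t, t = φ 0 0 - φ 3 0 := ⟨_, rfl⟩
  obtain ⟨y1, hy1⟩ : ∃ t, t = φ 0 1 - φ 1 1 := ⟨_, rfl⟩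
  obtain ⟨y2, hy2⟩ : ∃ t, t = φ 0 1 - φ 2 1 := ⟨_, rfl⟩
  obtain ⟨y3, hy3⟩ : ∃ t, t = φ 0 1 - φ 3 1 := ⟨_, rfl⟩
  rw [← hx1, ← hy1] at e01
  rw [← hx2, ← hy2] at e02
  rw [← hx3, ← hy3] at e03
  rw [show φ 1 0 - φ 2 0 = x2 - x1 by rw [hx1, hx2]; ring,
    show φ 1 1 - φ 2 1 = y2 - y1 by rw [hy1, hy2]; ring] at e12
  rw [show φ 1 0 - φ 3 0 = x3 - x1 by rw [hx1, hx3]; ring,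
    show φ 1 1 - φ 3 1 = y3 - y1 by rw [hy1, hy3]; ring] at e13
  rw [show φ 2 0 - φ 3 0 = x3 - x2 by rw [hx3, hx2]; ring,
    show φ 2 1 - φ 3 1 = y3 - y2 by rw [hy3, hy2]; ring] at e23
  have i12 : x1 * x2 + y1 * y2 = 1 / 2 := by linarith
  have i13 : x1 * x3 + y1 * y3 = 1 / 2 := by linarith
  have i23 : x2 * x3 + y2 * y3 = 1 / 2 := by linarith
  have gram : (x1 ^ 2 + y1 ^ 2) * (x2 ^ 2 + y2 ^ 2) * (x3 ^ 2 + y3 ^ 2)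
      + 2 * (x1 * x2 + y1 * y2) * (x1 * x3 + y1 * y3) * (x2 * x3 + y2 * y3)
      - (x1 ^ 2 + y1 ^ 2) * (x2 * x3 + y2 * y3) ^ 2
      - (x2 ^ 2 + y2 ^ 2) * (x1 * x3 + y1 * y3) ^ 2
      - (x3 ^ 2 + y3 ^ 2) * (x1 * x2 + y1 * y2) ^ 2 = 0 := by ring
  rw [e01, e02, e03, i12, i13, i23] at gram
  norm_num at gram

theorem k4_contains (G : SimpleGraph (Fin 5)) (x : Fin 5)
    (h : ∀ u, u ≠ x → ∀ v, v ≠ x → u ≠ v → G.Adj u v) :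
    ContainsSub (⊤ : SimpleGraph (Fin 4)) G :=
  ⟨x.succAbove, Fin.succAbove_right_injective, fun a b hab =>
    h _ (Fin.succAbove_ne _ _) _ (Fin.succAbove_ne _ _)
      (fun he => hab (Fin.succAbove_right_injective he))⟩

theorem three_others : ∀ x y : Fin 5, x ≠ y → ∃ z0 z1 z2 : Fin 5, z0 ≠ z1 ∧ z0 ≠ z2 ∧ z1 ≠ z2 ∧
    (z0 ≠ x ∧ z0 ≠ y) ∧ (z1 ≠ x ∧ z1 ≠ y) ∧ (z2 ≠ x ∧ z2 ≠ y) := by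
  decide +kernel

theorem k23_contains (G : SimpleGraph (Fin 5)) (x y : Fin 5) (hxy : x ≠ y)
    (h : ∀ z, z ≠ x → z ≠ y → G.Adj x z ∧ G.Adj y z) :
    ContainsSub (completeBipartiteGraph (Fin 2) (Fin 3)) G := by
  obtain ⟨z0, z1, z2, h01, h02, h12, ⟨a0, b0⟩, ⟨a1, b1⟩, ⟨a2, b2⟩⟩ := three_others x y hxy
  have hadj : ∀ (i : Fin 2) (j : Fin 3), G.Adj (![x, y] i) (![z0, z1, z2] j) := by
    intro i j
    have c0 := h _ a0 b0
    have c1 := h _ a1 b1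
    have c2 := h _ a2 b2
    fin_cases i <;> fin_cases j <;> simp [c0, c1, c2]
  refine ⟨Sum.elim ![x, y] ![z0, z1, z2], ?_, ?_⟩
  · refine Function.Injective.sumElim ?_ ?_ (fun i j => (hadj i j).ne)
    · intro i j
      fin_cases i <;> fin_cases j <;> simp [hxy, hxy.symm]
    · intro i j
      fin_cases i <;> fin_cases j <;>
        simp [h01, h02, h12, h01.symm, h02.symm, h12.symm]
  · rintro (a | a) (b | b) hab
    · simp at hab
    · exact hadj a b
    · exact (hadj b a).symm
    · simp at hab

theorem unit_distance_iff_K4_K23_free {V : Type*} [Fintype V] (G : SimpleGraph V)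
    (hV : Fintype.card V ≤ 5) :
    IsUnitDistance G ↔
      ¬ ContainsSub (⊤ : SimpleGraph (Fin 4)) G ∧
      ¬ ContainsSub (completeBipartiteGraph (Fin 2) (Fin 3)) G := by
  constructor
  · rintro ⟨φ, hφ, hd⟩
    refine ⟨?_, ?_⟩
    · rintro ⟨f, hf, hadj⟩
      exact no_K4 (φ ∘ f) (fun a b hab => hd _ _ (hadj a b hab))
    · rintro ⟨f, hf, hadj⟩
      have hinj := hφ.comp hf
      have hd' : ∀ (i : Fin 2) (j : Fin 3), dist (φ (f (Sum.inr j))) (φ (f (Sum.inl i))) = 1 :=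
        fun i j => hd _ _ (hadj _ _ (by simp))
      have hne : ∀ a b, a ≠ b → φ (f a) ≠ φ (f b) := fun a b hab h => hab (hinj h)
      rcases EuclideanGeometry.eq_of_dist_eq_of_dist_eq_of_finrank_eq_two
        (V := EuclideanSpace ℝ (Fin 2)) (by simp)
        (hne (Sum.inl 0) (Sum.inl 1) (by simp)) (hne (Sum.inr 0) (Sum.inr 1) (by simp))
        (hd' 0 0) (hd' 0 1) (hd' 0 2) (hd' 1 0) (hd' 1 1) (hd' 1 2) with h | h
      · exact hne _ _ (by simp) h
      · exact hne _ _ (by simp) h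
  · rintro ⟨hK4, hK23⟩
    obtain ⟨e⟩ : Nonempty (V ↪ Fin 5) :=
      Function.Embedding.nonempty_of_card_le (by simpa using hV)
    apply unitDistance_of_map G e
    rcases graph_main (G.map e) with ⟨x, h⟩ | ⟨x, y, hxy, h⟩ |
      ⟨p, r, h1, h2, s, h3, h4, h5, q, h6, h7, h8, h9, o, h10, h11, h12, h13⟩
    · refine (hK4 (containsSub_of_map _ G e ?_ (k4_contains _ x h))).elim
      exact fun a => ⟨a + 1, by revert a; decide⟩
    · refine (hK23 (containsSub_of_map _ G e ?_ (k23_contains _ x y hxy h))).elim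
      rintro (a | a)
      · exact ⟨Sum.inr 0, by simp⟩
      · exact ⟨Sum.inl 0, by simp⟩
    · exact fan_unit _ p r s q o h1 h2 h3 h4 h5 h6 h7 h8 h9 h10 h11 h12 h13
end

section
/- The graph F(8,13,1), defined as the simple graph on vertex set {1,...,8} with edge set {{1,2},{1,3},{1,5},{2,3},{2,4},{3,4},{3,5},{3,6},{5,6},{2,7},{4,7},{7,8},{6,8}}, is forbidden: there is no injective map φ : {1,...,8} → ℝ² with dist(φ(i), φ(j)) = 1 for every edge {i,j}. -/
theorem sq_add_sq_zero {x y : ℝ} (h : x ^ 2 + y ^ 2 = 0) : x = 0 ∧ y = 0 := by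
  have hx := sq_nonneg x
  have hy := sq_nonneg y
  exact ⟨pow_eq_zero_iff two_ne_zero |>.1 (by linarith), pow_eq_zero_iff two_ne_zero |>.1 (by linarith)⟩

theorem final_aux (a0 a1 b0 b1 c0 c1 x0 x1 y0 y1 z0 z1 : ℝ)
    (a : (a0 - b0) ^ 2 + (a1 - b1) ^ 2 = 1) (b : (a0 - c0) ^ 2 + (a1 - c1) ^ 2 = 1)
    (c : (b0 - c0) ^ 2 + (b1 - c1) ^ 2 = 1) (d : (x0 - z0) ^ 2 + (x1 - z1) ^ 2 = 1)
    (e : (y0 - z0) ^ 2 + (y1 - z1) ^ 2 = 1)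
    (k0 : x0 - y0 = 3 * (b0 - c0) - (a0 - c0)) (k1 : x1 - y1 = 3 * (b1 - c1) - (a1 - c1)) :
    False := by
  have k : (x0 - y0) ^ 2 + (x1 - y1) ^ 2 = 7 := by
    rw [k0, k1]; linarith
  linarith [sq_nonneg (x0 + y0 - 2 * z0), sq_nonneg (x1 + y1 - 2 * z1)]

theorem unit_dist_coord {p q : EuclideanSpace ℝ (Fin 2)} (h : dist p q = 1) :
    (p 0 - q 0) ^ 2 + (p 1 - q 1) ^ 2 = 1 := by
  rw [EuclideanSpace.dist_eq, Real.sqrt_eq_one] at h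
  simpa [Fin.sum_univ_two, Real.dist_eq, sq_abs] using h

theorem rhombus_aux_s4 (u0 u1 v0 v1 w0 w1 : ℝ) (hu : u0 ^ 2 + u1 ^ 2 = 1) (hv : v0 ^ 2 + v1 ^ 2 = 1)
    (huv : (u0 - v0) ^ 2 + (u1 - v1) ^ 2 = 1) (hwu : (u0 - w0) ^ 2 + (u1 - w1) ^ 2 = 1)
    (hwv : (v0 - w0) ^ 2 + (v1 - w1) ^ 2 = 1) :
    (w0 = 0 ∧ w1 = 0) ∨ (w0 = u0 + v0 ∧ w1 = u1 + v1) := by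
  have h1 : w0 * (u0 - v0) + w1 * (u1 - v1) = 0 := by linarith
  have h2 : (u0 + v0) * (u0 - v0) + (u1 + v1) * (u1 - v1) = 0 := by linarith
  have h3 : w0 * (w0 - (u0 + v0)) + w1 * (w1 - (u1 + v1)) = 0 := by linarith
  have c0 : (w0 * (u1 + v1) - w1 * (u0 + v0)) * (u0 - v0) = 0 := by
    linear_combination (u1 + v1) * h1 - w1 * h2
  have c1 : (w0 * (u1 + v1) - w1 * (u0 + v0)) * (u1 - v1) = 0 := by
    linear_combination w0 * h2 - (u0 + v0) * h1
  have c : w0 * (u1 + v1) - w1 * (u0 + v0) = 0 := by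
    linear_combination (u0 - v0) * c0 + (u1 - v1) * c1
      - (w0 * (u1 + v1) - w1 * (u0 + v0)) * huv
  have h4 : (w0 ^ 2 + w1 ^ 2) * ((w0 - (u0 + v0)) ^ 2 + (w1 - (u1 + v1)) ^ 2) = 0 := by
    linear_combination (w0 * (w0 - (u0 + v0)) + w1 * (w1 - (u1 + v1))) * h3
      + (w0 * (u1 + v1) - w1 * (u0 + v0)) * c
  rcases mul_eq_zero.1 h4 with h | h
  · left
    exact sq_add_sq_zero h
  · right
    obtain ⟨x, y⟩ := sq_add_sq_zero h
    exact ⟨sub_eq_zero.1 x, sub_eq_zero.1 y⟩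

theorem rhombus {p q r s : EuclideanSpace ℝ (Fin 2)} (hpq : dist p q = 1) (hpr : dist p r = 1)
    (hqr : dist q r = 1) (hqs : dist q s = 1) (hrs : dist r s = 1) (hps : p ≠ s) :
    s 0 = q 0 + r 0 - p 0 ∧ s 1 = q 1 + r 1 - p 1 := by
  have a := unit_dist_coord hpq
  have b := unit_dist_coord hpr
  have c := unit_dist_coord hqr
  have d := unit_dist_coord hqs
  have e := unit_dist_coord hrs
  rcases rhombus_aux_s4 (q 0 - p 0) (q 1 - p 1) (r 0 - p 0) (r 1 - p 1) (s 0 - p 0) (s 1 - p 1)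
    (by linarith) (by linarith) (by linarith) (by linarith) (by linarith) with h | h
  · exfalso
    apply hps
    ext i
    fin_cases i
    · simp; linarith [h.1]
    · simp; linarith [h.2]
  · constructor <;> linarith [h.1, h.2]

theorem F_8_13_1_forbidden :
    ¬ ∃ φ : ℕ → EuclideanSpace ℝ (Fin 2),
      Set.InjOn φ (Set.Icc 1 8) ∧
      dist (φ 1) (φ 2) = 1 ∧
      dist (φ 1) (φ 3) = 1 ∧
      dist (φ 1) (φ 5) = 1 ∧
      dist (φ 2) (φ 3) = 1 ∧
      dist (φ 2) (φ 4) = 1 ∧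
      dist (φ 3) (φ 4) = 1 ∧
      dist (φ 3) (φ 5) = 1 ∧
      dist (φ 3) (φ 6) = 1 ∧
      dist (φ 5) (φ 6) = 1 ∧
      dist (φ 2) (φ 7) = 1 ∧
      dist (φ 4) (φ 7) = 1 ∧
      dist (φ 7) (φ 8) = 1 ∧
      dist (φ 6) (φ 8) = 1 := by
  rintro ⟨φ, hi, h12, h13, h15, h23, h24, h34, h35, h36, h56, h27, h47, h78, h68⟩
  have ne : ∀ a b : ℕ, 1 ≤ a → a ≤ 8 → 1 ≤ b → b ≤ 8 → a ≠ b → φ a ≠ φ b :=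
    fun a b h1 h2 h3 h4 hab h => hab (hi ⟨h1, h2⟩ ⟨h3, h4⟩ h)
  have r4 := rhombus h12 h13 h23 h24 h34 (ne 1 4 (by simp) (by simp) (by simp) (by simp) (by simp))
  have r5 := rhombus (p := φ 2) (q := φ 1) (r := φ 3) (s := φ 5) (by rwa [dist_comm]) h23 h13 h15
    h35 (ne 2 5 (by simp) (by simp) (by simp) (by simp) (by simp))
  have r6 := rhombus h13 h15 h35 h36 h56 (ne 1 6 (by simp) (by simp) (by simp) (by simp) (by simp))
  have r7 := rhombus (p := φ 3) (q := φ 2) (r := φ 4) (s := φ 7) (by rwa [dist_comm]) h34 h24 h27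
    h47 (ne 3 7 (by simp) (by simp) (by simp) (by simp) (by simp))
  have a := unit_dist_coord h12
  have b := unit_dist_coord h13
  have c := unit_dist_coord h23
  have d := unit_dist_coord h78
  have e := unit_dist_coord h68
  obtain ⟨r40, r41⟩ := r4
  obtain ⟨r50, r51⟩ := r5
  obtain ⟨r60, r61⟩ := r6
  obtain ⟨r70, r71⟩ := r7
  exact final_aux _ _ _ _ _ _ _ _ _ _ _ _ a b c d e (by linarith only [r40, r50, r60, r70])
    (by linarith only [r41, r51, r61, r71])
end

section
/- The graph F(8,13,2), defined as the simple graph on vertex set {1,...,8} with edge set {{1,2},{1,4},{2,3},{2,4},{2,5},{3,5},{4,5},{5,6},{3,6},{3,7},{6,7},{1,8},{7,8}}, is forbidden: there is no injective map φ : {1,...,8} → ℝ² with dist(φ(i), φ(j)) = 1 for every edge {i,j}. -/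
lemma dist_sq_coord (x y : EuclideanSpace ℝ (Fin 2)) (h : dist x y = 1) :
    (x 0 - y 0)^2 + (x 1 - y 1)^2 = 1 := by
  rw [EuclideanSpace.dist_eq, Real.sqrt_eq_one] at h
  simpa [Fin.sum_univ_two, Real.dist_eq, sq_abs] using h

set_option maxHeartbeats 1000000 in
/-- Two distinct apexes of unit triangles on a common edge are reflections of each other. -/
lemma diamond (a b c d : EuclideanSpace ℝ (Fin 2)) (hab : dist a b = 1) (hac : dist a c = 1)
    (hbc : dist b c = 1) (hbd : dist b d = 1) (hcd : dist c d = 1) (hne : a ≠ d) :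
    d = b + c - a := by
  have h1 := dist_sq_coord _ _ hab
  have h2 := dist_sq_coord _ _ hac
  have h3 := dist_sq_coord _ _ hbc
  have h4 := dist_sq_coord _ _ hbd
  have h5 := dist_sq_coord _ _ hcd
  obtain ⟨e0, he0⟩ : ∃ e, e = a 0 - d 0 := ⟨_, rfl⟩
  obtain ⟨e1, he1⟩ : ∃ e, e = a 1 - d 1 := ⟨_, rfl⟩
  obtain ⟨f0, hf0⟩ : ∃ e, e = a 0 + d 0 - b 0 - c 0 := ⟨_, rfl⟩
  obtain ⟨f1, hf1⟩ : ∃ e, e = a 1 + d 1 - b 1 - c 1 := ⟨_, rfl⟩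
  obtain ⟨w0, hw0⟩ : ∃ e, e = c 0 - b 0 := ⟨_, rfl⟩
  obtain ⟨w1, hw1⟩ : ∃ e, e = c 1 - b 1 := ⟨_, rfl⟩
  have hw : w0^2 + w1^2 = 1 := by subst_vars; linarith
  have hew : e0 * w0 + e1 * w1 = 0 := by subst_vars; linarith
  have hfw : f0 * w0 + f1 * w1 = 0 := by subst_vars; linarith
  have hef : e0 * f0 + e1 * f1 = 0 := by subst_vars; linarith
  have hx : e0 * f1 - e1 * f0 = 0 := by
    linear_combination (-(e0 * f1 - e1 * f0)) * hw + (w0 * f1 - w1 * f0) * hew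
      + (w1 * e0 - w0 * e1) * hfw
  have he : e0^2 + e1^2 ≠ 0 := by
    intro h
    apply hne
    have a0 : e0 = 0 := pow_eq_zero_iff (two_ne_zero) |>.mp (le_antisymm (by linarith [sq_nonneg e1]) (sq_nonneg e0))
    have a1 : e1 = 0 := pow_eq_zero_iff (two_ne_zero) |>.mp (le_antisymm (by linarith [sq_nonneg e0]) (sq_nonneg e1))
    ext i
    fin_cases i
    · simp; linarith
    · simp; linarith
  have g0 : f0 = 0 := by
    have : (e0^2 + e1^2) * f0 = 0 := by linear_combination e0 * hef - e1 * hx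
    exact (mul_eq_zero.mp this).resolve_left he
  have g1 : f1 = 0 := by
    have : (e0^2 + e1^2) * f1 = 0 := by linear_combination e1 * hef + e0 * hx
    exact (mul_eq_zero.mp this).resolve_left he
  ext i
  fin_cases i
  · simp; linarith
  · simp; linarith

theorem F_8_13_2_forbidden :
    ¬ ∃ φ : ℕ → EuclideanSpace ℝ (Fin 2),
      Set.InjOn φ (Set.Icc 1 8) ∧
      dist (φ 1) (φ 2) = 1 ∧
      dist (φ 1) (φ 4) = 1 ∧
      dist (φ 2) (φ 3) = 1 ∧
      dist (φ 2) (φ 4) = 1 ∧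
      dist (φ 2) (φ 5) = 1 ∧
      dist (φ 3) (φ 5) = 1 ∧
      dist (φ 4) (φ 5) = 1 ∧
      dist (φ 5) (φ 6) = 1 ∧
      dist (φ 3) (φ 6) = 1 ∧
      dist (φ 3) (φ 7) = 1 ∧
      dist (φ 6) (φ 7) = 1 ∧
      dist (φ 1) (φ 8) = 1 ∧
      dist (φ 7) (φ 8) = 1 := by
  rintro ⟨φ, hi, h12, h14, h23, h24, h25, h35, h45, h56, h36, h37, h67, h18, h78⟩
  have ne : ∀ i j : ℕ, 1 ≤ i → i ≤ 8 → 1 ≤ j → j ≤ 8 → i ≠ j → φ i ≠ φ j :=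
    fun i j a b c d h e => h (hi ⟨a, b⟩ ⟨c, d⟩ e)
  have e5 := diamond (φ 1) (φ 2) (φ 4) (φ 5) h12 h14 h24 h25 h45 (ne _ _ (by norm_num) (by norm_num) (by norm_num) (by norm_num) (by norm_num))
  have e3 := diamond (φ 4) (φ 2) (φ 5) (φ 3) (by rwa [dist_comm]) h45 h25 h23 (by rwa [dist_comm])
    (ne _ _ (by norm_num) (by norm_num) (by norm_num) (by norm_num) (by norm_num))
  have e6 := diamond (φ 2) (φ 3) (φ 5) (φ 6) h23 h25 h35 h36 h56
    (ne _ _ (by norm_num) (by norm_num) (by norm_num) (by norm_num) (by norm_num))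
  have e7 := diamond (φ 5) (φ 3) (φ 6) (φ 7) (by rwa [dist_comm]) h56 h36 h37 h67
    (ne _ _ (by norm_num) (by norm_num) (by norm_num) (by norm_num) (by norm_num))
  have key : φ 1 - φ 7 = (3 : ℝ) • (φ 1 - φ 2) := by
    rw [e7, e6, e3, e5]; module
  have h17 : dist (φ 1) (φ 7) = 3 := by
    rw [dist_eq_norm, key, norm_smul, ← dist_eq_norm, h12]; norm_num
  have := dist_triangle (φ 1) (φ 8) (φ 7)
  rw [dist_comm (φ 8), h17, h18, h78] at this
  norm_num at this
end

section
/- The graph F(9,14,18), defined as the simple graph on vertex set {1,...,9} with edge set {{1,2},{2,4},{3,4},{1,3},{2,3},{1,5},{5,6},{2,6},{4,7},{6,7},{7,9},{1,9},{5,8},{4,8}}, is forbidden: there is no injective map φ : {1,...,9} → ℝ² with dist(φ(i), φ(j)) = 1 for every edge {i,j}. -/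
lemma orth3 (a b c d e f : ℝ) (h1 : a*c+b*d=0) (h2 : a*e+b*f=0) (h3 : c*e+d*f=0) :
    (a^2+b^2)*(c^2+d^2)*(e^2+f^2) = 0 := by
  have : (a^2+b^2)*(c^2+d^2)*(e^2+f^2) = (a^2+b^2)*(c*e+d*f)^2 + (c^2+d^2)*(a*e+b*f)^2
    + (e^2+f^2)*(a*c+b*d)^2 - 2*(a*c+b*d)*(a*e+b*f)*(c*e+d*f) := by ring
  rw [this, h1, h2, h3]; ring

lemma coord_of_dist {x y : EuclideanSpace ℝ (Fin 2)} (h : dist x y = 1) :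
    (x 0 - y 0)^2 + (x 1 - y 1)^2 = 1 := by
  have h' : dist x y ^ 2 = 1 := by rw [h]; norm_num
  rw [EuclideanSpace.dist_eq, Real.sq_sqrt (by positivity)] at h'
  simpa [Fin.sum_univ_two, Real.dist_eq, sq_abs] using h'

lemma sq_zero {x y : ℝ} (h : x^2 + y^2 = 0) : x = 0 ∧ y = 0 := by
  have hx := sq_nonneg x
  have hy := sq_nonneg y
  exact ⟨pow_eq_zero_iff two_ne_zero |>.1 (by linarith), pow_eq_zero_iff two_ne_zero |>.1 (by linarith)⟩

lemma eq_of {x y : EuclideanSpace ℝ (Fin 2)} (h : (x 0 - y 0)^2 + (x 1 - y 1)^2 = 0) : x = y := by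
  ext i
  fin_cases i
  · exact sub_eq_zero.1 (sq_zero h).1
  · exact sub_eq_zero.1 (sq_zero h).2

lemma rhombus_s13 {a b c d : EuclideanSpace ℝ (Fin 2)}
    (h1 : (a 0 - b 0)^2 + (a 1 - b 1)^2 = 1) (h2 : (b 0 - c 0)^2 + (b 1 - c 1)^2 = 1)
    (h3 : (c 0 - d 0)^2 + (c 1 - d 1)^2 = 1) (h4 : (d 0 - a 0)^2 + (d 1 - a 1)^2 = 1)
    (hac : a ≠ c) (hbd : b ≠ d) : c 0 = b 0 + d 0 - a 0 ∧ c 1 = b 1 + d 1 - a 1 := by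
  have := orth3 (a 0 - c 0) (a 1 - c 1) (b 0 - d 0) (b 1 - d 1)
    (a 0 + c 0 - b 0 - d 0) (a 1 + c 1 - b 1 - d 1) (by linarith) (by linarith) (by linarith)
  rcases mul_eq_zero.1 this with h | h
  · rcases mul_eq_zero.1 h with h | h
    · exact absurd (eq_of h) hac
    · exact absurd (eq_of h) hbd
  · obtain ⟨e1, e2⟩ := sq_zero h
    constructor <;> linarith

lemma final (a0 a1 b0 b1 c0 c1 q0 q1 r0 r1 : ℝ) (ha : a0^2+a1^2=1) (hb : b0^2+b1^2=1)
    (hab : (a0-b0)^2+(a1-b1)^2=1) (hc : c0^2+c1^2=1) (hq : q0^2+q1^2=1)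
    (hq' : (a0+b0+c0-q0)^2+(a1+b1+c1-q1)^2=1)
    (hr : (c0-r0)^2+(c1-r1)^2=1) (hr' : (a0+b0-r0)^2+(a1+b1-r1)^2=1) :
    (r0-q0)^2+(r1-q1)^2=0 := by
  have key : (a0+b0+c0-2*q0)^2 + (a1+b1+c1-2*q1)^2 + (a0+b0+c0-2*r0)^2 + (a1+b1+c1-2*r1)^2 = 0 := by
    linarith
  have := sq_nonneg (a0+b0+c0-2*q0 + (a0+b0+c0-2*r0))
  have := sq_nonneg (a1+b1+c1-2*q1 + (a1+b1+c1-2*r1))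
  have := sq_nonneg (r0-q0)
  have := sq_nonneg (r1-q1)
  linarith

theorem F_9_14_18_forbidden :
    ¬ ∃ φ : ℕ → EuclideanSpace ℝ (Fin 2),
      Set.InjOn φ (Set.Icc 1 9) ∧
      dist (φ 1) (φ 2) = 1 ∧
      dist (φ 2) (φ 4) = 1 ∧
      dist (φ 3) (φ 4) = 1 ∧
      dist (φ 1) (φ 3) = 1 ∧
      dist (φ 2) (φ 3) = 1 ∧
      dist (φ 1) (φ 5) = 1 ∧
      dist (φ 5) (φ 6) = 1 ∧
      dist (φ 2) (φ 6) = 1 ∧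
      dist (φ 4) (φ 7) = 1 ∧
      dist (φ 6) (φ 7) = 1 ∧
      dist (φ 7) (φ 9) = 1 ∧
      dist (φ 1) (φ 9) = 1 ∧
      dist (φ 5) (φ 8) = 1 ∧
      dist (φ 4) (φ 8) = 1 := by
  rintro ⟨φ, inj, h12, h24, h34, h13, h23, h15, h56, h26, h47, h67, h79, h19, h58, h48⟩
  have ne : ∀ i j : ℕ, 1 ≤ i ∧ i ≤ 9 → 1 ≤ j ∧ j ≤ 9 → i ≠ j → φ i ≠ φ j :=
    fun i j hi hj hij h => hij (inj hi hj h)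
  replace h12 := coord_of_dist h12
  replace h24 := coord_of_dist h24
  replace h34 := coord_of_dist h34
  replace h13 := coord_of_dist h13
  replace h23 := coord_of_dist h23
  replace h15 := coord_of_dist h15
  replace h56 := coord_of_dist h56
  replace h26 := coord_of_dist h26
  replace h47 := coord_of_dist h47
  replace h67 := coord_of_dist h67
  replace h79 := coord_of_dist h79
  replace h19 := coord_of_dist h19
  replace h58 := coord_of_dist h58
  replace h48 := coord_of_dist h48
  obtain ⟨x4, y4⟩ := rhombus_s13 (a := φ 1) (b := φ 2) (c := φ 4) (d := φ 3) h12 h24 (by linarith)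
    (by linarith) (ne 1 4 (by norm_num) (by norm_num) (by norm_num))
    (ne 2 3 (by norm_num) (by norm_num) (by norm_num))
  obtain ⟨x6, y6⟩ := rhombus_s13 (a := φ 1) (b := φ 2) (c := φ 6) (d := φ 5) h12 h26 (by linarith)
    (by linarith) (ne 1 6 (by norm_num) (by norm_num) (by norm_num))
    (ne 2 5 (by norm_num) (by norm_num) (by norm_num))
  obtain ⟨x7, y7⟩ := rhombus_s13 (a := φ 2) (b := φ 4) (c := φ 7) (d := φ 6) h24 h47 (by linarith)
    (by linarith) (ne 2 7 (by norm_num) (by norm_num) (by norm_num))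
    (ne 4 6 (by norm_num) (by norm_num) (by norm_num))
  rw [x7, y7, x6, y6, x4, y4] at h79
  rw [x4, y4] at h48
  have := final (φ 2 0 - φ 1 0) (φ 2 1 - φ 1 1) (φ 3 0 - φ 1 0) (φ 3 1 - φ 1 1)
    (φ 5 0 - φ 1 0) (φ 5 1 - φ 1 1) (φ 9 0 - φ 1 0) (φ 9 1 - φ 1 1)
    (φ 8 0 - φ 1 0) (φ 8 1 - φ 1 1) (by linarith) (by linarith) (by linarith) (by linarith)
    (by linarith) (by linarith) (by linarith) (by linarith)
  refine ne 8 9 (by norm_num) (by norm_num) (by norm_num) (eq_of ?_)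
  linarith
end

section
/- The graph H₁, defined as the simple graph on vertex set {1,...,9} with edge set {{1,2},{2,3},{3,5},{4,5},{1,4},{2,4},{2,5},{5,6},{6,8},{7,8},{7,9},{6,9},{8,9},{1,8},{3,7}}, is unit-distance: there exists an injective map φ : {1,...,9} → ℝ² with dist(φ(i), φ(j)) = 1 for every edge {i,j}. -/
lemma ud_dist (a b c d : ℝ) (h : (a - c)^2 + (b - d)^2 = 1) :
    dist (!₂[a, b] : EuclideanSpace ℝ (Fin 2)) !₂[c, d] = 1 := by
  rw [EuclideanSpace.dist_eq]
  simp [Fin.sum_univ_two, Real.dist_eq, sq_abs, h]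

noncomputable def udY (x : ℝ) : ℝ := √(1 - x^2)
noncomputable def udN (x : ℝ) : ℝ := (3/2 - x)^2 + (√3/2 - udY x)^2
noncomputable def udH (x : ℝ) : ℝ := √(1 / udN x - 1/4)
noncomputable def udAx (x : ℝ) : ℝ := (3/2 - x)/2 + udH x * (√3/2 - udY x)
noncomputable def udAy (x : ℝ) : ℝ := (√3/2 - udY x)/2 - udH x * (3/2 - x)
noncomputable def udPx (x : ℝ) : ℝ := udAx x - x/2 + √3 * udY x / 2 - 2
noncomputable def udPy (x : ℝ) : ℝ := udAy x - √3 * x / 2 - udY x / 2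
noncomputable def udF (x : ℝ) : ℝ := udPx x ^ 2 + udPy x ^ 2 - 1

lemma ud_r : (1.73205:ℝ) ≤ √3 ∧ √3 ≤ 1.73206 :=
  ⟨Real.le_sqrt_of_sq_le (by norm_num), Real.sqrt_le_iff.2 (by norm_num)⟩

lemma ud_Y (x l u : ℝ) (hl : l^2 ≤ 1 - x^2) (hu : 1 - x^2 ≤ u^2) (hu0 : 0 ≤ u) :
    l ≤ udY x ∧ udY x ≤ u :=
  ⟨Real.le_sqrt_of_sq_le hl, Real.sqrt_le_iff.2 ⟨hu0, hu⟩⟩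

lemma ud_H (x l u N1 N2 : ℝ) (h1 : 0 < N1) (h2 : N1 ≤ udN x) (h3 : udN x ≤ N2)
    (hl : l^2 ≤ 1/N2 - 1/4) (hu : 1/N1 - 1/4 ≤ u^2) (hu0 : 0 ≤ u) :
    l ≤ udH x ∧ udH x ≤ u := by
  have a1 : 1 / udN x ≤ 1/N1 := one_div_le_one_div_of_le h1 h2
  have a2 : 1 / N2 ≤ 1/udN x := one_div_le_one_div_of_le (h1.trans_le h2) h3
  exact ⟨Real.le_sqrt_of_sq_le (by linarith), Real.sqrt_le_iff.2 ⟨hu0, by linarith⟩⟩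

lemma ud_bd (x : ℝ) (h1 : -0.17 ≤ x) (h2 : x ≤ -0.16) :
    (0.985 ≤ udY x ∧ udY x ≤ 0.9875) ∧ (2.769 ≤ udN x ∧ udN x ≤ 2.804) ∧
    (0.326 ≤ udH x ∧ udH x ≤ 0.334) := by
  have hr := ud_r
  have hY := ud_Y x 0.985 0.9875 (by nlinarith) (by nlinarith) (by norm_num)
  have hN : 2.769 ≤ udN x ∧ udN x ≤ 2.804 := by
    unfold udN
    constructor <;> nlinarith
  exact ⟨hY, hN, ud_H x _ _ _ _ (by norm_num) hN.1 hN.2 (by norm_num) (by norm_num) (by norm_num)⟩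

lemma ud_cont : ContinuousOn udF (Set.Icc (-0.17) (-0.16)) := by
  have hY : Continuous udY := by unfold udY; fun_prop
  have hN : Continuous udN := by unfold udN; fun_prop
  have hH : ContinuousOn udH (Set.Icc (-0.17) (-0.16)) := by
    unfold udH
    refine ContinuousOn.sqrt (ContinuousOn.sub (ContinuousOn.div (by fun_prop) hN.continuousOn ?_) (by fun_prop))
    intro x hx
    have := (ud_bd x hx.1 hx.2).2.1.1
    intro h0
    norm_num [h0] at this
  have hY' := hY.continuousOn (s := Set.Icc (-0.17) (-0.16))
  unfold udF udPx udPy udAx udAy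
  fun_prop


lemma ud_left : udF (-0.17) ≤ 0 := by
  have hr := ud_r
  have hY := ud_Y (-0.17) 0.9854 0.9855 (by norm_num) (by norm_num) (by norm_num)
  have hN : 2.803 ≤ udN (-0.17) ∧ udN (-0.17) ≤ 2.8033 := by
    unfold udN
    constructor <;> nlinarith
  have hH := ud_H (-0.17) 0.3265 0.3269 _ _ (by norm_num) hN.1 hN.2 (by norm_num) (by norm_num)
    (by norm_num)
  have hx : -0.267 ≤ udPx (-0.17) ∧ udPx (-0.17) ≤ -0.264 := by
    unfold udPx udAx
    constructor <;> nlinarith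
  have hy : -0.952 ≤ udPy (-0.17) ∧ udPy (-0.17) ≤ -0.949 := by
    unfold udPy udAy
    constructor <;> nlinarith
  unfold udF
  nlinarith

lemma ud_right : 0 ≤ udF (-0.16) := by
  have hr := ud_r
  have hY := ud_Y (-0.16) 0.9871 0.9872 (by norm_num) (by norm_num) (by norm_num)
  have hN : 2.7701 ≤ udN (-0.16) ∧ udN (-0.16) ≤ 2.7704 := by
    unfold udN
    constructor <;> nlinarith
  have hH := ud_H (-0.16) 0.333 0.3333 _ _ (by norm_num) hN.1 hN.2 (by norm_num) (by norm_num)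
    (by norm_num)
  have hx : -0.277 ≤ udPx (-0.16) ∧ udPx (-0.16) ≤ -0.274 := by
    unfold udPx udAx
    constructor <;> nlinarith
  have hy : -0.97 ≤ udPy (-0.16) ∧ udPy (-0.16) ≤ -0.967 := by
    unfold udPy udAy
    constructor <;> nlinarith
  unfold udF
  nlinarith

lemma ud_inj (φ : ℕ → EuclideanSpace ℝ (Fin 2)) (h1 : φ 1 0 < φ 4 0) (h2 : φ 4 0 < φ 6 0)
    (h3 : φ 6 0 < φ 8 0) (h4 : φ 8 0 < φ 2 0) (h5 : φ 2 0 < φ 5 0) (h6 : φ 5 0 < φ 9 0)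
    (h7 : φ 9 0 < φ 7 0) (h8 : φ 7 0 < φ 3 0) : Set.InjOn φ (Set.Icc 1 9) := by
  rintro i ⟨hi1, hi2⟩ j ⟨hj1, hj2⟩ h
  have h : φ i 0 = φ j 0 := by rw [h]
  interval_cases i <;> interval_cases j <;> first | rfl | (exfalso; linarith)

theorem H1_unit_distance :
    ∃ φ : ℕ → EuclideanSpace ℝ (Fin 2),
      Set.InjOn φ (Set.Icc 1 9) ∧
      dist (φ 1) (φ 2) = 1 ∧
      dist (φ 2) (φ 3) = 1 ∧
      dist (φ 3) (φ 5) = 1 ∧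
      dist (φ 4) (φ 5) = 1 ∧
      dist (φ 1) (φ 4) = 1 ∧
      dist (φ 2) (φ 4) = 1 ∧
      dist (φ 2) (φ 5) = 1 ∧
      dist (φ 5) (φ 6) = 1 ∧
      dist (φ 6) (φ 8) = 1 ∧
      dist (φ 7) (φ 8) = 1 ∧
      dist (φ 7) (φ 9) = 1 ∧
      dist (φ 6) (φ 9) = 1 ∧
      dist (φ 8) (φ 9) = 1 ∧
      dist (φ 1) (φ 8) = 1 ∧
      dist (φ 3) (φ 7) = 1 := by
  obtain ⟨x, hx, hF⟩ := intermediate_value_Icc (by norm_num) ud_cont ⟨ud_left, ud_right⟩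
  obtain ⟨hY, hN, hH⟩ := ud_bd x hx.1 hx.2
  have hr := ud_r
  have hr2 : √3 ^ 2 = (3:ℝ) := Real.sq_sqrt (by norm_num)
  have hx1 := hx.1
  have hx2 := hx.2
  have hY2 : udY x ^ 2 = 1 - x^2 := Real.sq_sqrt (by nlinarith)
  have hH2 : udH x ^ 2 * udN x = 1 - udN x / 4 := by
    have : udH x ^ 2 = 1 / udN x - 1/4 := by
      apply Real.sq_sqrt
      have : 1 / 2.804 ≤ 1 / udN x := one_div_le_one_div_of_le (by linarith) hN.2
      norm_num at this ⊢
      linarith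
    have h0 : udN x ≠ 0 := by linarith
    rw [this]
    field_simp
  have hA : udAx x ^ 2 + udAy x ^ 2 = 1 := by
    unfold udAx udAy
    unfold udN at hH2
    linear_combination hH2
  have hB : (udAx x - (3/2 - x)) ^ 2 + (udAy x - (√3/2 - udY x)) ^ 2 = 1 := by
    unfold udAx udAy
    unfold udN at hH2
    linear_combination hH2
  have hAx : 0.788 ≤ udAx x ∧ udAx x ≤ 0.798 := by
    unfold udAx
    constructor <;> nlinarith
  have hry : 1.706 ≤ √3 * udY x ∧ √3 * udY x ≤ 1.7105 := by
    constructor <;> nlinarith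
  unfold udF udPx udPy at hF
  generalize udAx x = a at *
  generalize udAy x = b at *
  generalize udY x = y at *
  generalize √3 = r at *
  refine ⟨fun n => match n with
    | 1 => !₂[-1, 0]
    | 2 => !₂[0, 0]
    | 3 => !₂[1, 0]
    | 4 => !₂[-1/2, r/2]
    | 5 => !₂[1/2, r/2]
    | 6 => !₂[-1 + a + x, b + y]
    | 7 => !₂[-1 + a + (-x/2 + r*y/2), b + (-r*x/2 - y/2)]
    | 8 => !₂[-1 + a, b]
    | 9 => !₂[-1 + a + (x/2 + r*y/2), b + (-r*x/2 + y/2)]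
    | _ => 0, ?_, ?_, ?_, ?_, ?_, ?_, ?_, ?_, ?_, ?_, ?_, ?_, ?_, ?_, ?_, ?_⟩
  · apply ud_inj <;> simp <;> linarith
  all_goals apply ud_dist
  · norm_num
  · norm_num
  · linear_combination hr2 / 4
  · norm_num
  · linear_combination hr2 / 4
  · linear_combination hr2 / 4
  · linear_combination hr2 / 4
  · linear_combination hB
  · linear_combination hY2
  · linear_combination (x^2+y^2) / 4 * hr2 + hY2
  · linear_combination hY2
  · linear_combination (x^2+y^2) / 4 * hr2 + hY2
  · linear_combination (x^2+y^2) / 4 * hr2 + hY2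
  · linear_combination hA
  · linear_combination hF
end

section
/- The graph H₂, defined as the simple graph on vertex set {1,...,9} with edge set {{1,2},{2,4},{3,4},{1,3},{2,3},{4,8},{8,9},{7,9},{4,7},{1,5},{5,6},{1,6},{5,7},{6,8},{4,9}}, is unit-distance: there exists an injective map φ : {1,...,9} → ℝ² with dist(φ(i), φ(j)) = 1 for every edge {i,j}. -/
lemma aux_dist_s19 (a b c d : ℝ) (h : (a - c) ^ 2 + (b - d) ^ 2 = 1) :
    dist (!₂[a, b] : EuclideanSpace ℝ (Fin 2)) !₂[c, d] = 1 := by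
  rw [EuclideanSpace.dist_eq]
  simp [Fin.sum_univ_two, Real.dist_eq, sq_abs, h]

lemma exists_t : ∃ t : ℝ, t ^ 3 = 1 / 9 ∧ 0.4807 < t ∧ t < 0.4808 := by
  have h0 : (0 : ℝ) ≤ (1 / 9 : ℝ) ^ (1 / 3 : ℝ) := by positivity
  have h : ((1 / 9 : ℝ) ^ (1 / 3 : ℝ)) ^ 3 = 1 / 9 := by
    rw [← Real.rpow_natCast, ← Real.rpow_mul (by norm_num)]
    norm_num
  refine ⟨(1 / 9 : ℝ) ^ (1 / 3 : ℝ), h, ?_, ?_⟩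
  · exact lt_of_pow_lt_pow_left₀ 3 h0 (by rw [h]; norm_num)
  · exact lt_of_pow_lt_pow_left₀ 3 (by norm_num) (by rw [h]; norm_num)

lemma exists_sqrt (a l u : ℝ) (_hl : 0 ≤ l) (hu : 0 ≤ u) (h1 : l ^ 2 < a) (h2 : a < u ^ 2) :
    ∃ s : ℝ, s ^ 2 = a ∧ l < s ∧ s < u := by
  have ha : 0 ≤ a := (sq_nonneg l).trans h1.le
  refine ⟨√a, Real.sq_sqrt ha, ?_, ?_⟩
  · exact Real.lt_sqrt_of_sq_lt h1
  · exact (Real.sqrt_lt' (lt_of_le_of_ne hu (by rintro rfl; nlinarith))).2 h2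

set_option maxHeartbeats 4000000 in
theorem H2_unit_distance :
    ∃ φ : ℕ → EuclideanSpace ℝ (Fin 2),
      Set.InjOn φ (Set.Icc 1 9) ∧
      dist (φ 1) (φ 2) = 1 ∧
      dist (φ 2) (φ 4) = 1 ∧
      dist (φ 3) (φ 4) = 1 ∧
      dist (φ 1) (φ 3) = 1 ∧
      dist (φ 2) (φ 3) = 1 ∧
      dist (φ 4) (φ 8) = 1 ∧
      dist (φ 8) (φ 9) = 1 ∧
      dist (φ 7) (φ 9) = 1 ∧
      dist (φ 4) (φ 7) = 1 ∧
      dist (φ 1) (φ 5) = 1 ∧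
      dist (φ 5) (φ 6) = 1 ∧
      dist (φ 1) (φ 6) = 1 ∧
      dist (φ 5) (φ 7) = 1 ∧
      dist (φ 6) (φ 8) = 1 ∧
      dist (φ 4) (φ 9) = 1 := by
  obtain ⟨t, ht, ht1, ht2⟩ := exists_t
  obtain ⟨r, hr, hr1, hr2⟩ := exists_sqrt 3 1.732 1.7321 (by norm_num) (by norm_num) (by norm_num)
    (by norm_num)
  obtain ⟨s, hs, hs1, hs2⟩ := exists_sqrt (t - t ^ 2 / 4) 0.65 0.651 (by norm_num) (by norm_num)
    (by nlinarith) (by nlinarith)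
  have hrt1 : 1.732 * 0.4807 < r * t := by nlinarith
  have hrt2 : r * t < 1.7321 * 0.4808 := by nlinarith
  have hq1 : -0.30 < (3 / 5 - 18 / 5 * t + 18 / 5 * t ^ 2) := by nlinarith
  have hq2 : (3 / 5 - 18 / 5 * t + 18 / 5 * t ^ 2) < -0.29 := by nlinarith
  have hsq1 : -0.20 < s * (3 / 5 - 18 / 5 * t + 18 / 5 * t ^ 2) := by nlinarith
  have hsq2 : s * (3 / 5 - 18 / 5 * t + 18 / 5 * t ^ 2) < -0.18 := by nlinarith
  obtain ⟨x1, hx1⟩ : ∃ x : ℝ, x = 0 := ⟨_, rfl⟩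
  obtain ⟨y1, hy1⟩ : ∃ y : ℝ, y = 0 := ⟨_, rfl⟩
  obtain ⟨x2, hx2⟩ : ∃ x : ℝ, x = r / 2 := ⟨_, rfl⟩
  obtain ⟨y2, hy2⟩ : ∃ y : ℝ, y = 1 / 2 := ⟨_, rfl⟩
  obtain ⟨x3, hx3⟩ : ∃ x : ℝ, x = r / 2 := ⟨_, rfl⟩
  obtain ⟨y3, hy3⟩ : ∃ y : ℝ, y = -1 / 2 := ⟨_, rfl⟩
  obtain ⟨x4, hx4⟩ : ∃ x : ℝ, x = r := ⟨_, rfl⟩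
  obtain ⟨y4, hy4⟩ : ∃ y : ℝ, y = 0 := ⟨_, rfl⟩
  obtain ⟨x5, hx5⟩ : ∃ x : ℝ, x = (1 - t / 2) * r / 2 + s / 2 := ⟨_, rfl⟩
  obtain ⟨y5, hy5⟩ : ∃ y : ℝ, y = s * r / 2 - (1 - t / 2) / 2 := ⟨_, rfl⟩
  obtain ⟨x6, hx6⟩ : ∃ x : ℝ, x = (1 - t / 2) * r / 2 - s / 2 := ⟨_, rfl⟩
  obtain ⟨y6, hy6⟩ : ∃ y : ℝ, y = s * r / 2 + (1 - t / 2) / 2 := ⟨_, rfl⟩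
  obtain ⟨x7, hx7⟩ : ∃ x : ℝ, x = r - (r / 3 + r * t / 2) / 2 + s * (3 / 5 - 18 / 5 * t + 18 / 5 * t ^ 2) / 2 := ⟨_, rfl⟩
  obtain ⟨y7, hy7⟩ : ∃ y : ℝ, y = -((s * (3 / 5 - 18 / 5 * t + 18 / 5 * t ^ 2) * r / 3) / 2) - (1 / 2 + 3 / 4 * t) := ⟨_, rfl⟩
  obtain ⟨x8, hx8⟩ : ∃ x : ℝ, x = r - (r / 3 + r * t / 2) / 2 - s * (3 / 5 - 18 / 5 * t + 18 / 5 * t ^ 2) / 2 := ⟨_, rfl⟩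
  obtain ⟨y8, hy8⟩ : ∃ y : ℝ, y = -((s * (3 / 5 - 18 / 5 * t + 18 / 5 * t ^ 2) * r / 3) / 2) + (1 / 2 + 3 / 4 * t) := ⟨_, rfl⟩
  obtain ⟨x9, hx9⟩ : ∃ x : ℝ, x = r - (r / 3 + r * t / 2) := ⟨_, rfl⟩
  obtain ⟨y9, hy9⟩ : ∃ y : ℝ, y = -(s * (3 / 5 - 18 / 5 * t + 18 / 5 * t ^ 2) * r / 3) := ⟨_, rfl⟩
  have a1 : -0.030 < x1 := by rw [hx1]; linarith
  have b1 : x1 < 0.030 := by rw [hx1]; linarith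
  have a2 : 0.836 < x2 := by rw [hx2]; linarith
  have b2 : x2 < 0.896 := by rw [hx2]; linarith
  have a3 : 0.836 < x3 := by rw [hx3]; linarith
  have b3 : x3 < 0.896 := by rw [hx3]; linarith
  have a4 : 1.702 < x4 := by rw [hx4]; linarith
  have b4 : x4 < 1.762 := by rw [hx4]; linarith
  have a5 : 0.953 < x5 := by rw [hx5]; linarith
  have b5 : x5 < 1.013 := by rw [hx5]; linarith
  have a6 : 0.303 < x6 := by rw [hx6]; linarith
  have b6 : x6 < 0.363 := by rw [hx6]; linarith
  have a7 : 1.108 < x7 := by rw [hx7]; linarith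
  have b7 : x7 < 1.168 := by rw [hx7]; linarith
  have a8 : 1.302 < x8 := by rw [hx8]; linarith
  have b8 : x8 < 1.362 := by rw [hx8]; linarith
  have a9 : 0.708 < x9 := by rw [hx9]; linarith
  have b9 : x9 < 0.768 := by rw [hx9]; linarith
  let φ : ℕ → EuclideanSpace ℝ (Fin 2) := fun n => match n with
    | 1 => !₂[x1, y1]
    | 2 => !₂[x2, y2]
    | 3 => !₂[x3, y3]
    | 4 => !₂[x4, y4]
    | 5 => !₂[x5, y5]
    | 6 => !₂[x6, y6]
    | 7 => !₂[x7, y7]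
    | 8 => !₂[x8, y8]
    | _ => !₂[x9, y9]
  refine ⟨φ, ?_, ?_⟩
  · intro i hi j hj hij
    clear hx5 hx6 hx7 hx8 hx9 hy5 hy6 hy7 hy8 hy9 hq1 hq2 hsq1 hsq2 hrt1 hrt2 ht hr hs
    have k16 : x1 < x6 := by linarith only [b1, a6]
    have k69 : x6 < x9 := by linarith only [b6, a9]
    have k92 : x9 < x2 := by linarith only [b9, a2]
    have k93 : x9 < x3 := by linarith only [b9, a3]
    have k25 : x2 < x5 := by linarith only [b2, a5]
    have k35 : x3 < x5 := by linarith only [b3, a5]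
    have k57 : x5 < x7 := by linarith only [b5, a7]
    have k78 : x7 < x8 := by linarith only [b7, a8]
    have k84 : x8 < x4 := by linarith only [b8, a4]
    clear a1 b1 a2 b2 a3 b3 a4 b4 a5 b5 a6 b6 a7 b7 a8 b8 a9 b9
    obtain ⟨hi1, hi2⟩ := hi
    obtain ⟨hj1, hj2⟩ := hj
    have h0 : (φ i) 0 = (φ j) 0 := by rw [hij]
    have h1 : (φ i) 1 = (φ j) 1 := by rw [hij]
    clear hij ht1 ht2 hr1 hr2 hs1 hs2 hx1 hx2 hx3 hx4
    have f1 : (φ 1) 0 = x1 := rfl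
    have f2 : (φ 2) 0 = x2 := rfl
    have f3 : (φ 3) 0 = x3 := rfl
    have f4 : (φ 4) 0 = x4 := rfl
    have f5 : (φ 5) 0 = x5 := rfl
    have f6 : (φ 6) 0 = x6 := rfl
    have f7 : (φ 7) 0 = x7 := rfl
    have f8 : (φ 8) 0 = x8 := rfl
    have f9 : (φ 9) 0 = x9 := rfl
    have g2 : (φ 2) 1 = y2 := rfl
    have g3 : (φ 3) 1 = y3 := rfl
    clear_value φ
    interval_cases i <;> interval_cases j <;> first
      | rfl
      | (exfalso; clear h1; simp only [f1, f2, f3, f4, f5, f6, f7, f8, f9] at h0; order only [h0, k16, k69, k92, k93, k25, k35, k57, k78, k84])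
      | (exfalso; linarith only [h1, g2, g3, hy2, hy3])
  · refine ⟨?_, ?_, ?_, ?_, ?_, ?_, ?_, ?_, ?_, ?_, ?_, ?_, ?_, ?_, ?_⟩ <;> apply aux_dist_s19 <;>
      clear * - ht hr hs hx1 hx2 hx3 hx4 hx5 hx6 hx7 hx8 hx9 hy1 hy2 hy3 hy4 hy5 hy6 hy7 hy8 hy9 <;>
      subst_vars <;> grind
end
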